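/- For generic α ∈ ℂ, the quantities V_α and w satisfy the nonlinear shift relation Ṽ̂_α·(ŵ − w̃) = χ_{α,δ}(ξ+ε)·V̂_α − χ_{α,ε}(ξ+δ)·Ṽ_α, where Ṽ̂_α denotes V_α evaluated at (n+1,m+1,h), V̂_α at (n,m+1,h), and Ṽ_α at (n+1,m,h), and similarly for w. -/

import Mathlib

open scoped BigOperators

noncomputable section

/-- A period lattice in `ℂ` spanned by two `ℝ`-independent periods. -/
structure EllLattice where
  ω₁ : ℂ
  ω₂ : ℂ
  indep : ∀ a b : ℝ, a • ω₁ + b • ω₂ = 0 → a = 0 ∧ b = 0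

namespace EllLattice

/-- Membership in the lattice `Λ = ℤω₁ + ℤω₂`. -/
def mem (L : EllLattice) (z : ℂ) : Prop := ∃ m n : ℤ, z = m • L.ω₁ + n • L.ω₂

/-- The lattice point with integer coordinates `p = (m, n)`. -/
def per (L : EllLattice) (p : ℤ × ℤ) : ℂ := p.1 • L.ω₁ + p.2 • L.ω₂

/-- The Weierstrass sigma function associated to the lattice, defined by its
Hadamard product over the nonzero lattice points. -/
def sigma (L : EllLattice) (z : ℂ) : ℂ :=
  z * ∏' p : {p : ℤ × ℤ // p ≠ 0},
      ((1 - z / L.per p.1) *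
        Complex.exp (z / L.per p.1 + z ^ 2 / (2 * (L.per p.1) ^ 2)))

/-- The Weierstrass zeta function `ζ = σ′/σ`. -/
def zeta (L : EllLattice) (z : ℂ) : ℂ := deriv L.sigma z / L.sigma z

/-- The Weierstrass `℘`-function `℘ = −ζ′`. -/
def wp (L : EllLattice) (z : ℂ) : ℂ := - deriv L.zeta z

/-- `Φ_ξ(κ) = σ(ξ+κ)/(σ(ξ)σ(κ))`. -/
def Phi (L : EllLattice) (ξ κ : ℂ) : ℂ := L.sigma (ξ + κ) / (L.sigma ξ * L.sigma κ)

/-- The Lamé function `Ψ_ξ(κ) = Φ_ξ(κ)·e^{−ζ(ξ)κ}`. -/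
def Psi (L : EllLattice) (ξ κ : ℂ) : ℂ := L.Phi ξ κ * Complex.exp (-(L.zeta ξ) * κ)

/-- `η_δ(ξ) = ζ(ξ+δ) − ζ(ξ) − ζ(δ)`. -/
def eta (L : EllLattice) (δ ξ : ℂ) : ℂ := L.zeta (ξ + δ) - L.zeta ξ - L.zeta δ

/-- `χ_{α,β}(ξ) = ζ(α) + ζ(β) + ζ(ξ) − ζ(ξ+α+β)`. -/
def chi (L : EllLattice) (α β ξ : ℂ) : ℂ :=
  L.zeta α + L.zeta β + L.zeta ξ - L.zeta (ξ + α + β)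

end EllLattice

open Matrix

/-- All the data entering the elliptic (N,N′)-soliton solutions of the lattice KP system:
a period lattice, lattice parameters `δ, ε, λ`, a base point `ξ₀`, rapidity parameters
`κ_i, κ′_j`, initial plane-wave constants `ρ⁰_i, ν⁰_j` and a constant `N′×N` matrix `C`. -/
structure KPData (N N' : ℕ) where
  L : EllLattice
  del : ℂ
  eps : ℂ
  lam : ℂ
  xi0 : ℂ
  κ : Fin N → ℂ
  κ' : Fin N' → ℂ
  ρ0 : Fin N → ℂ
  ν0 : Fin N' → ℂ
  C : Matrix (Fin N') (Fin N) ℂ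

namespace KPData

variable {N N' : ℕ}

/-- `ξ = ξ₀ + nδ + mε + hλ`. -/
def xi (D : KPData N N') (n m h : ℤ) : ℂ :=
  D.xi0 + n • D.del + m • D.eps + h • D.lam

/-- The plane-wave factor `ρ_i(n,m,h)`. -/
def ρ (D : KPData N N') (i : Fin N) (n m h : ℤ) : ℂ :=
  (Complex.exp (-(D.L.zeta D.del) * D.κ i) * D.L.Psi D.del (-(D.κ i))) ^ n *
  (Complex.exp (-(D.L.zeta D.eps) * D.κ i) * D.L.Psi D.eps (-(D.κ i))) ^ m *
  (Complex.exp (-(D.L.zeta D.lam) * D.κ i) * D.L.Psi D.lam (-(D.κ i))) ^ h *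
  Complex.exp (D.L.zeta (D.xi n m h) * D.κ i) * D.ρ0 i

/-- The plane-wave factor `ν_j(n,m,h)`. -/
def ν (D : KPData N N') (j : Fin N') (n m h : ℤ) : ℂ :=
  (Complex.exp (D.L.zeta D.del * D.κ' j) * D.L.Psi D.del (D.κ' j)) ^ (-n) *
  (Complex.exp (D.L.zeta D.eps * D.κ' j) * D.L.Psi D.eps (D.κ' j)) ^ (-m) *
  (Complex.exp (D.L.zeta D.lam * D.κ' j) * D.L.Psi D.lam (D.κ' j)) ^ (-h) *
  Complex.exp (D.L.zeta (D.xi n m h) * D.κ' j) * D.ν0 j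

/-- The dressed elliptic Cauchy matrix `M_{ij} = ρ_i Ψ_ξ(κ_i + κ′_j) ν_j`. -/
def M (D : KPData N N') (n m h : ℤ) : Matrix (Fin N) (Fin N') ℂ :=
  Matrix.of fun i j => D.ρ i n m h * D.L.Psi (D.xi n m h) (D.κ i + D.κ' j) * D.ν j n m h

/-- The column vector `r = (ρ_i Ψ_ξ(κ_i))_i`. -/
def r (D : KPData N N') (n m h : ℤ) : Fin N → ℂ :=
  fun i => D.ρ i n m h * D.L.Psi (D.xi n m h) (D.κ i)

/-- The column vector `s = (ν_j Ψ_ξ(κ′_j))_j`. -/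
def s (D : KPData N N') (n m h : ℤ) : Fin N' → ℂ :=
  fun j => D.ν j n m h * D.L.Psi (D.xi n m h) (D.κ' j)

/-- The τ-function `τ = det(1 + MC)`. -/
def τ (D : KPData N N') (n m h : ℤ) : ℂ := (1 + D.M n m h * D.C).det

/-- The diagonal matrix `χ_{α,K}(ξ) = diag(χ_{α,κ_i}(ξ))`. -/
def DK (D : KPData N N') (α : ℂ) (n m h : ℤ) : Matrix (Fin N) (Fin N) ℂ :=
  Matrix.diagonal fun i => D.L.chi α (D.κ i) (D.xi n m h)

/-- The diagonal matrix `χ_{β,K′}(ξ) = diag(χ_{β,κ′_j}(ξ))`. -/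
def DK' (D : KPData N N') (β : ℂ) (n m h : ℤ) : Matrix (Fin N') (Fin N') ℂ :=
  Matrix.diagonal fun j => D.L.chi β (D.κ' j) (D.xi n m h)

/-- `W_β = 1 − sᵀ (χ_{β,K′}(ξ))⁻¹ C (1+MC)⁻¹ r`. -/
def W (D : KPData N N') (β : ℂ) (n m h : ℤ) : ℂ :=
  1 - D.s n m h ⬝ᵥ ((D.DK' β n m h)⁻¹ *ᵥ (D.C *ᵥ ((1 + D.M n m h * D.C)⁻¹ *ᵥ D.r n m h)))

/-- `V_α = 1 − sᵀ (1+CM)⁻¹ C (χ_{α,K}(ξ))⁻¹ r`. -/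
def V (D : KPData N N') (α : ℂ) (n m h : ℤ) : ℂ :=
  1 - D.s n m h ⬝ᵥ ((1 + D.C * D.M n m h)⁻¹ *ᵥ (D.C *ᵥ ((D.DK α n m h)⁻¹ *ᵥ D.r n m h)))

/-- `w₀ = sᵀ C (1+MC)⁻¹ r`. -/
def w0 (D : KPData N N') (n m h : ℤ) : ℂ :=
  D.s n m h ⬝ᵥ (D.C *ᵥ ((1 + D.M n m h * D.C)⁻¹ *ᵥ D.r n m h))

/-- `w = ζ(ξ) − w₀ − nζ(δ) − mζ(ε) − hζ(λ)`. -/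
def w (D : KPData N N') (n m h : ℤ) : ℂ :=
  D.L.zeta (D.xi n m h) - D.w0 n m h - n • D.L.zeta D.del - m • D.L.zeta D.eps -
    h • D.L.zeta D.lam

/-- `S_{β,α} = sᵀ (χ_{β,K′}(ξ))⁻¹ C (1+MC)⁻¹ (χ_{α,K}(ξ))⁻¹ r`. -/
def S (D : KPData N N') (β α : ℂ) (n m h : ℤ) : ℂ :=
  D.s n m h ⬝ᵥ ((D.DK' β n m h)⁻¹ *ᵥ
    (D.C *ᵥ ((1 + D.M n m h * D.C)⁻¹ *ᵥ ((D.DK α n m h)⁻¹ *ᵥ D.r n m h))))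

/-- `u_α = (1+MC)⁻¹ (χ_{α,K}(ξ))⁻¹ r`. -/
def u (D : KPData N N') (α : ℂ) (n m h : ℤ) : Fin N → ℂ :=
  (1 + D.M n m h * D.C)⁻¹ *ᵥ ((D.DK α n m h)⁻¹ *ᵥ D.r n m h)

/-- `u₀ = (1+MC)⁻¹ r`. -/
def u0 (D : KPData N N') (n m h : ℤ) : Fin N → ℂ :=
  (1 + D.M n m h * D.C)⁻¹ *ᵥ D.r n m h

/-- the adjoint (row) vector `ᵗu_β = sᵀ (χ_{β,K′}(ξ))⁻¹ (1+CM)⁻¹`. -/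
def tu (D : KPData N N') (β : ℂ) (n m h : ℤ) : Fin N' → ℂ :=
  (D.s n m h ᵥ* (D.DK' β n m h)⁻¹) ᵥ* (1 + D.C * D.M n m h)⁻¹

/-- the adjoint (row) vector `ᵗu₀ = sᵀ (1+CM)⁻¹`. -/
def tu0 (D : KPData N N') (n m h : ℤ) : Fin N' → ℂ :=
  D.s n m h ᵥ* (1 + D.C * D.M n m h)⁻¹

/-- The gauge variable `𝒱_α = Φ_ξ(α)·V_α`. -/
def calV (D : KPData N N') (α : ℂ) (n m h : ℤ) : ℂ :=
  D.L.Phi (D.xi n m h) α * D.V α n m h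

/-- The gauge variable `𝒲_β = Φ_ξ(β)·W_β`. -/
def calW (D : KPData N N') (β : ℂ) (n m h : ℤ) : ℂ :=
  D.L.Phi (D.xi n m h) β * D.W β n m h

/-- The Schwarzian variable `Z_{β,α} = Φ_ξ(α+β)·(1 − χ_{α,β}(ξ)·S_{β,α})`. -/
def Z (D : KPData N N') (β α : ℂ) (n m h : ℤ) : ℂ :=
  D.L.Phi (D.xi n m h) (α + β) * (1 - D.L.chi α β (D.xi n m h) * D.S β α n m h)

/-- Genericity of the parameters (together with finitely many auxiliary points `extra`):
no nontrivial integer combination of `ξ₀, δ, ε, λ`, the rapidity parameters and the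
auxiliary points lies on the lattice.  In particular all arguments of `σ` occurring in
the soliton solutions and their shifts lie outside `Λ`. -/
def Generic {P : ℕ} (D : KPData N N') (extra : Fin P → ℂ) : Prop :=
  ∀ (c0 cn cm ch : ℤ) (a : Fin N → ℤ) (b : Fin N' → ℤ) (e : Fin P → ℤ),
    ¬ (c0 = 0 ∧ cn = 0 ∧ cm = 0 ∧ ch = 0 ∧ a = 0 ∧ b = 0 ∧ e = 0) →
    ¬ D.L.mem (c0 • D.xi0 + cn • D.del + cm • D.eps + ch • D.lam +
      (∑ i, a i • D.κ i) + (∑ j, b j • D.κ' j) + ∑ t, e t • extra t)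

end KPData

/-!
Write `M, r, s` at a site and `M', r', s'` at the neighbour in a direction with lattice parameter
`d`. The three-term identity of `σ` makes the step a rank-one update `M' = M - r s'ᵀ`, and the
vector `a = χ_{α,K}(ξ)⁻¹ r` moves to `a' = χ_{α,d}(ξ) a - r`. Solving the updated linear system
gives `u'_α = χ_{α,d}(ξ) u_α - V'_α u₀`, and pairing with `sᵀ C` turns this into a relation between
`V_α`, `V'_α`, `w₀` and `sᵀ C u'_α`. Two steps with parameters `δ` and `ε` into the same site share
`u'_α`, and the corresponding `s` differ by a scalar multiple of `s'` because the rapidities cancel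
in `χ_{κ′_j,δ} - χ_{κ′_j,ε}`; subtracting the two relations leaves the claim.

All identities between `Φ` and `χ` come from the addition formula expressing
`ζ(x) + ζ(y) + ζ(z) - ζ(x + y + z)` as a quotient of values of `σ`. It is proved by Liouville's
theorem: as functions of `x`, both sides, cleared of denominators, have the same multipliers under
translation by periods, so their quotient is entire and doubly periodic.
-/

section EntireFunctions

open Filter Topology

variable {g d : ℂ → ℂ}

lemma dense_setOf_ne_zero_of_deriv_ne_zero (hd : Differentiable ℂ d)
    (hsimple : ∀ x, d x = 0 → deriv d x ≠ 0) : Dense {x | d x ≠ 0} := by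
  intro x
  by_cases hx : d x = 0
  · exact mem_closure_iff_frequently.mpr
      (((hd x).hasDerivAt.eventually_ne (c := 0) (hsimple x hx)).frequently.filter_mono
        nhdsWithin_le_nhds)
  · exact subset_closure hx

lemma exists_differentiable_eq_mul (hg : Differentiable ℂ g) (hd : Differentiable ℂ d)
    (hzero : ∀ x, d x = 0 → g x = 0) (hsimple : ∀ x, d x = 0 → deriv d x ≠ 0) :
    ∃ F : ℂ → ℂ, Differentiable ℂ F ∧ ∀ x, g x = F x * d x := by
  classical
  let F : ℂ → ℂ := fun x ↦ if d x = 0 then deriv g x / deriv d x else g x / d x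
  have hdslope {f : ℂ → ℂ} (hf : Differentiable ℂ f) (x : ℂ) : Differentiable ℂ (dslope f x) :=
    differentiableOn_univ.mp
      ((Complex.differentiableOn_dslope univ_mem).mpr hf.differentiableOn)
  refine ⟨F, fun x ↦ ?_, fun x ↦ ?_⟩
  · by_cases hx : d x = 0
    · have hne : dslope d x x ≠ 0 := by rw [dslope_same]; exact hsimple x hx
      refine ((hdslope hg x x).fun_div (hdslope hd x x) hne).congr_of_eventuallyEq ?_
      filter_upwards [(hdslope hd x).continuous.continuousAt.eventually_ne hne] with y hy
      rcases eq_or_ne y x with rfl | hyx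
      · simp only [F, if_pos hx, dslope_same]
      · have hyx' : y - x ≠ 0 := sub_ne_zero.mpr hyx
        have hgy : g y = (y - x) * dslope g x y := by
          rw [← smul_eq_mul, sub_smul_dslope, hzero x hx, sub_zero]
        have hdy : d y = (y - x) * dslope d x y := by
          rw [← smul_eq_mul, sub_smul_dslope, hx, sub_zero]
        simp only [F, hgy, hdy, if_neg (mul_ne_zero hyx' hy), mul_div_mul_left _ _ hyx']
    · refine ((hg x).fun_div (hd x) hx).congr_of_eventuallyEq ?_
      filter_upwards [hd.continuous.continuousAt.eventually_ne hx] with y hy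
      simp only [F, if_neg hy]
  · by_cases hx : d x = 0
    · rw [hx, hzero x hx, mul_zero]
    · simp only [F, if_neg hx, div_mul_cancel₀ _ hx]

lemma exists_eq_const_mul_of_quasiperiodic (Λ : Submodule ℤ ℂ) [DiscreteTopology Λ]
    [IsZLattice ℝ Λ] (hg : Differentiable ℂ g) (hd : Differentiable ℂ d)
    (hzero : ∀ x, d x = 0 → g x = 0) (hsimple : ∀ x, d x = 0 → deriv d x ≠ 0)
    (hmult : ∀ w ∈ Λ, ∃ q : ℂ → ℂ, (∀ x, q x ≠ 0) ∧ (∀ x, g (x + w) = q x * g x) ∧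
      ∀ x, d (x + w) = q x * d x) :
    ∃ c, ∀ x, g x = c * d x := by
  obtain ⟨F, hF, hgF⟩ := exists_differentiable_eq_mul hg hd hzero hsimple
  have hper (x w : ℂ) (hw : w ∈ Λ) : F (x + w) = F x := by
    obtain ⟨q, hq, hgq, hdq⟩ := hmult w hw
    refine congrFun ((hF.continuous.comp (continuous_add_const w)).ext_on
      (dense_setOf_ne_zero_of_deriv_ne_zero hd hsimple) hF.continuous fun y hy ↦ ?_) x
    refine mul_right_cancel₀ (mul_ne_zero (hq y) hy) ?_
    calc F (y + w) * (q y * d y) = q y * g y := by rw [← hdq, ← hgF, hgq]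
      _ = F y * (q y * d y) := by rw [hgF]; ring
  have hbdd := (IsZLattice.isCompact_range_of_periodic Λ F hF.continuous hper).isBounded
  exact ⟨F 0, fun x ↦ by rw [hgF, hF.apply_eq_apply_of_bounded hbdd x 0]⟩

end EntireFunctions

section LinearAlgebra

variable {ι κ R : Type*} [Fintype ι] [DecidableEq ι] [Fintype κ] [CommRing R]
  {A : Matrix ι κ R} {B : Matrix κ ι R}

lemma one_add_mul_inv_mul [DecidableEq κ] (h : IsUnit (1 + A * B).det) :
    (1 + B * A)⁻¹ * B = B * (1 + A * B)⁻¹ := by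
  have h' : IsUnit (1 + B * A).det := by rwa [Matrix.det_one_add_mul_comm]
  have hcomm : B * (1 + A * B) = (1 + B * A) * B := by
    rw [Matrix.mul_add, Matrix.add_mul, Matrix.mul_one, Matrix.one_mul, Matrix.mul_assoc]
  rw [← Matrix.mul_nonsing_inv_cancel_right _ ((1 + B * A)⁻¹ * B) h, Matrix.mul_assoc _ B, hcomm,
    Matrix.nonsing_inv_mul_cancel_left _ _ h']

lemma eq_smul_inv_mulVec_sub_of_rank_one_update {a r u : ι → R} {s : κ → R} {c : R}
    (h : IsUnit (1 + A * B).det)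
    (hu : (1 + (A - vecMulVec r s) * B) *ᵥ u = c • a - r) :
    u = c • ((1 + A * B)⁻¹ *ᵥ a) - (1 - s ⬝ᵥ (B *ᵥ u)) • ((1 + A * B)⁻¹ *ᵥ r) := by
  have hAu : (1 + A * B) *ᵥ u = c • a - (1 - s ⬝ᵥ (B *ᵥ u)) • r := by
    calc (1 + A * B) *ᵥ u
        = (1 + (A - vecMulVec r s) * B) *ᵥ u + (s ⬝ᵥ (B *ᵥ u)) • r := by
          simp only [Matrix.add_mulVec, Matrix.sub_mul, Matrix.sub_mulVec, ← Matrix.mulVec_mulVec,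
            Matrix.vecMulVec_mulVec, op_smul_eq_smul]
          abel
      _ = c • a - (1 - s ⬝ᵥ (B *ᵥ u)) • r := by rw [hu, sub_smul, one_smul]; abel
  rw [← Matrix.mulVec_smul, ← Matrix.mulVec_smul, ← Matrix.mulVec_sub, ← hAu,
    Matrix.mulVec_mulVec, Matrix.nonsing_inv_mul _ h, Matrix.one_mulVec]

end LinearAlgebra

namespace EllLattice

open Filter Topology

/-- The period lattice as a Mathlib `PeriodPair`, giving access to its theory of `℘`. -/
def toPeriodPair (L : EllLattice) : PeriodPair where
  ω₁ := L.ω₁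
  ω₂ := L.ω₂
  indep := LinearIndependent.pair_iff.mpr L.indep

/-- The lattice `Λ` as a subgroup of `ℂ`. -/
abbrev lattice (L : EllLattice) : Submodule ℤ ℂ := L.toPeriodPair.lattice

variable (L : EllLattice)

lemma mem_iff {z : ℂ} : L.mem z ↔ z ∈ L.lattice := by
  simp only [PeriodPair.mem_lattice, mem, zsmul_eq_mul, eq_comm (a := z), toPeriodPair]

lemma isOpen_compl_lattice : IsOpen (L.lattice : Set ℂ)ᶜ :=
  L.toPeriodPair.isClosed_lattice.isOpen_compl

lemma countable_lattice : (L.lattice : Set ℂ).Countable :=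
  Set.countable_coe_iff.mp (L.toPeriodPair.latticeEquivProd.toEquiv.countable_iff.mpr inferInstance)

lemma isConnected_compl_lattice : IsConnected (L.lattice : Set ℂ)ᶜ :=
  L.countable_lattice.isConnected_compl_of_one_lt_rank <| by
    rw [Complex.rank_real_complex]; norm_num

/-- The factor of the Hadamard product of `σ` vanishing at the period `l`. The junk value
`z / 0 = 0` makes the exponential trivial for `l = 0`, where the factor is `z`. -/
def sigmaFactor (l z : ℂ) : ℂ :=
  (if l = 0 then z else 1 - z / l) * Complex.exp (z / l + z ^ 2 / (2 * l ^ 2))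

lemma sigmaFactor_zero_left (z : ℂ) : sigmaFactor 0 z = z := by simp [sigmaFactor]

lemma sigmaFactor_of_ne_zero {l : ℂ} (hl : l ≠ 0) (z : ℂ) :
    sigmaFactor l z = (1 - z / l) * Complex.exp (z / l + z ^ 2 / (2 * l ^ 2)) := by
  rw [sigmaFactor, if_neg hl]

lemma sigmaFactor_zero_right {l : ℂ} (hl : l ≠ 0) : sigmaFactor l 0 = 1 := by
  simp [sigmaFactor_of_ne_zero hl]

lemma sigmaFactor_eq_zero_iff {l z : ℂ} : sigmaFactor l z = 0 ↔ z = l := by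
  rw [sigmaFactor, mul_eq_zero, or_iff_left (Complex.exp_ne_zero _)]
  split_ifs with hl
  · rw [hl]
  · rw [sub_eq_zero, eq_comm, div_eq_one_iff_eq hl]

lemma hasDerivAt_sigmaFactor (l z : ℂ) :
    HasDerivAt (sigmaFactor l) ((if l = 0 then 1 else -1 / l +
      (1 - z / l) * (1 / l + z / l ^ 2)) * Complex.exp (z / l + z ^ 2 / (2 * l ^ 2))) z := by
  have hexp : HasDerivAt (fun z : ℂ ↦ z / l + z ^ 2 / (2 * l ^ 2)) (1 / l + z / l ^ 2) z := by
    convert! ((hasDerivAt_id z).div_const l).add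
      ((hasDerivAt_pow 2 z).div_const (2 * l ^ 2)) using 1
    rw [pow_one, Nat.cast_ofNat, mul_div_mul_left _ _ two_ne_zero]
  by_cases hl : l = 0
  · subst hl
    simpa [funext sigmaFactor_zero_left] using hasDerivAt_id' z
  · rw [funext (sigmaFactor_of_ne_zero hl), if_neg hl]
    convert! (((hasDerivAt_id z).div_const l).const_sub 1).mul hexp.cexp using 1
    simp only [id]
    ring

lemma differentiable_sigmaFactor (l : ℂ) : Differentiable ℂ (sigmaFactor l) :=
  fun z ↦ (hasDerivAt_sigmaFactor l z).differentiableAt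

lemma logDeriv_sigmaFactor {l z : ℂ} (hz : z ≠ l) :
    logDeriv (sigmaFactor l) z = 1 / (z - l) + 1 / l + z / l ^ 2 := by
  rw [logDeriv_apply, (hasDerivAt_sigmaFactor l z).deriv, sigmaFactor,
    mul_div_mul_right _ _ (Complex.exp_ne_zero _)]
  split_ifs with hl
  · simp [hl]
  · have hlz : l - z ≠ 0 := sub_ne_zero.mpr hz.symm
    rw [← neg_sub l z]
    field_simp
    ring

/-- Since `d/du ((1 - u) exp (u + u²/2)) = -u² exp (u + u²/2)`, the mean value inequality on the
disc of radius `‖u‖` gives a cubic bound. -/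
lemma norm_one_sub_mul_exp_sub_one_le {u : ℂ} (hu : ‖u‖ ≤ 1) :
    ‖(1 - u) * Complex.exp (u + u ^ 2 / 2) - 1‖ ≤ Real.exp (3 / 2) * ‖u‖ ^ 3 := by
  have hderiv (v : ℂ) : HasDerivAt (fun v : ℂ ↦ (1 - v) * Complex.exp (v + v ^ 2 / 2))
      (-v ^ 2 * Complex.exp (v + v ^ 2 / 2)) v := by
    convert! ((hasDerivAt_id v).const_sub 1).mul
      ((hasDerivAt_id v).add ((hasDerivAt_pow 2 v).div_const 2)).cexp using 1
    simp only [Pi.add_apply, id]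
    push_cast
    ring
  have hbound : ∀ v ∈ Metric.closedBall (0 : ℂ) ‖u‖,
      ‖-v ^ 2 * Complex.exp (v + v ^ 2 / 2)‖ ≤ ‖u‖ ^ 2 * Real.exp (3 / 2) := by
    intro v hv
    rw [mem_closedBall_zero_iff] at hv
    rw [norm_mul, norm_neg, norm_pow]
    gcongr
    refine (Complex.norm_exp_le_exp_norm _).trans (Real.exp_le_exp.mpr ?_)
    calc ‖v + v ^ 2 / 2‖ ≤ ‖v‖ + ‖v‖ ^ 2 / 2 := (norm_add_le _ _).trans_eq (by simp)
      _ ≤ 3 / 2 := by nlinarith [norm_nonneg v]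
  have h := (convex_closedBall (0 : ℂ) ‖u‖).norm_image_sub_le_of_norm_hasDerivWithin_le
    (fun v _ ↦ (hderiv v).hasDerivWithinAt) hbound (x := 0) (y := u) (by simp) (by simp)
  simp only [sub_zero, zero_pow two_ne_zero, zero_div, add_zero, Complex.exp_zero, mul_one] at h
  linarith [h]

lemma norm_sigmaFactor_sub_one_le {l z : ℂ} (hl : l ≠ 0) (hz : ‖z‖ ≤ ‖l‖) :
    ‖sigmaFactor l z - 1‖ ≤ Real.exp (3 / 2) * ‖z‖ ^ 3 * ‖l‖ ^ (-3 : ℝ) := by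
  have hl' : 0 < ‖l‖ := norm_pos_iff.mpr hl
  have h := norm_one_sub_mul_exp_sub_one_le (u := z / l) (by rwa [norm_div, div_le_one hl'])
  rw [sigmaFactor_of_ne_zero hl, Real.rpow_neg hl'.le]
  convert! h using 1
  · ring_nf
  · rw [norm_div, div_pow, div_eq_mul_inv, mul_assoc]
    norm_cast

lemma summable_norm_rpow_neg_three : Summable fun l : L.lattice ↦ ‖l‖ ^ (-3 : ℝ) :=
  ZLattice.summable_norm_rpow _ _ (by simp; norm_num)

lemma eventually_lt_norm (R : ℝ) : ∀ᶠ l : L.lattice in cofinite, R < ‖(l : ℂ)‖ :=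
  (isCompact_iff_finite.mp (isCompact_closedBall (0 : L.lattice) R)).subset fun l hl ↦ by
    simpa using hl

lemma eventually_norm_sigmaFactor_sub_one_le {R : ℝ} (hR : 0 ≤ R) :
    ∀ᶠ l : L.lattice in cofinite, ∀ z ∈ Metric.ball (0 : ℂ) R,
      ‖sigmaFactor l z - 1‖ ≤ Real.exp (3 / 2) * R ^ 3 * ‖l‖ ^ (-3 : ℝ) := by
  filter_upwards [L.eventually_lt_norm R] with l hl z hz
  have hzR : ‖z‖ ≤ R := (mem_ball_zero_iff.mp hz).le
  refine (norm_sigmaFactor_sub_one_le (norm_pos_iff.mp (hR.trans_lt hl))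
    (hzR.trans hl.le)).trans ?_
  rw [Submodule.coe_norm]
  gcongr

lemma summable_norm_sigmaFactor_sub_one (z : ℂ) :
    Summable fun l : L.lattice ↦ ‖sigmaFactor l z - 1‖ := by
  refine Summable.of_norm_bounded_eventually (L.summable_norm_rpow_neg_three.mul_left
    (Real.exp (3 / 2) * (‖z‖ + 1) ^ 3)) ?_
  filter_upwards [L.eventually_norm_sigmaFactor_sub_one_le (R := ‖z‖ + 1) (by positivity)] with l hl
  simpa using hl z (by simp)

lemma latticeEquivProd_symm_apply (p : ℤ × ℤ) :
    (L.toPeriodPair.latticeEquivProd.symm p : ℂ) = L.per p := by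
  rw [L.toPeriodPair.latticeEquiv_symm_apply]
  simp [per, toPeriodPair]

lemma per_eq_zero_iff {p : ℤ × ℤ} : L.per p = 0 ↔ p = 0 := by
  rw [← latticeEquivProd_symm_apply, ZeroMemClass.coe_eq_zero, LinearEquiv.map_eq_zero_iff]

lemma multipliable_update_sigmaFactor [DecidableEq L.lattice] (z : ℂ) :
    Multipliable (Function.update (fun l : L.lattice ↦ sigmaFactor l z) 0 1) := by
  have hsum : Summable fun l : L.lattice ↦
      ‖Function.update (fun l : L.lattice ↦ sigmaFactor l z) 0 1 l - 1‖ := by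
    refine (L.summable_norm_sigmaFactor_sub_one z).congr_cofinite ?_
    filter_upwards [(Set.finite_singleton (0 : L.lattice)).compl_mem_cofinite] with l hl
    rw [Function.update_of_ne hl]
  simpa using multipliable_one_add_of_summable hsum

lemma sigma_eq_tprod (z : ℂ) : L.sigma z = ∏' l : L.lattice, sigmaFactor l z := by
  classical
  rw [(L.multipliable_update_sigmaFactor z).tprod_eq_mul_tprod_ite', ZeroMemClass.coe_zero,
    sigmaFactor_zero_left, sigma, ← L.toPeriodPair.latticeEquivProd.symm.toEquiv.tprod_eq]
  congr 1
  refine Eq.trans (tprod_congr fun p ↦ ?_) (tprod_subtype_eq_of_mulSupport_subset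
    (s := {p : ℤ × ℤ | p ≠ 0}) fun p hp hp0 ↦ hp (by simp [hp0]))
  simp [p.2, L.latticeEquivProd_symm_apply,
    sigmaFactor_of_ne_zero (mt L.per_eq_zero_iff.mp p.2)]

lemma hasProdLocallyUniformlyOn_sigma :
    HasProdLocallyUniformlyOn (fun (l : L.lattice) z ↦ sigmaFactor l z) L.sigma Set.univ := by
  refine hasProdLocallyUniformlyOn_of_forall_compact isOpen_univ fun K _ hK ↦ ?_
  obtain ⟨R, hR, hKR⟩ := hK.isBounded.subset_ball_lt 0 0
  have h := Summable.hasProdUniformlyOn_one_add hK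
    (f := fun (l : L.lattice) z ↦ sigmaFactor l z - 1)
    (L.summable_norm_rpow_neg_three.mul_left (Real.exp (3 / 2) * R ^ 3))
    (by
      filter_upwards [L.eventually_norm_sigmaFactor_sub_one_le hR.le] with l hl z hz
      exact hl z (hKR hz))
    fun l ↦ ((differentiable_sigmaFactor l).continuous.sub continuous_const).continuousOn
  simpa only [add_sub_cancel, ← L.sigma_eq_tprod] using h

lemma differentiable_prod_sigmaFactor (t : Finset L.lattice) :
    Differentiable ℂ fun z ↦ ∏ l ∈ t, sigmaFactor l z :=
  Differentiable.fun_finsetProd fun _ _ ↦ differentiable_sigmaFactor _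

lemma tendstoLocallyUniformlyOn_prod_sigmaFactor :
    TendstoLocallyUniformlyOn (fun (t : Finset L.lattice) z ↦ ∏ l ∈ t, sigmaFactor l z)
      L.sigma atTop Set.univ :=
  hasProdLocallyUniformlyOn_iff_tendstoLocallyUniformlyOn.mp L.hasProdLocallyUniformlyOn_sigma

lemma differentiable_sigma : Differentiable ℂ L.sigma :=
  differentiableOn_univ.mp <| L.tendstoLocallyUniformlyOn_prod_sigmaFactor.differentiableOn
    (.of_forall fun t ↦ (L.differentiable_prod_sigmaFactor t).differentiableOn) isOpen_univ

lemma sigma_eq_zero_iff {z : ℂ} : L.sigma z = 0 ↔ z ∈ L.lattice := by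
  rw [L.sigma_eq_tprod]
  refine ⟨fun h ↦ by_contra fun hz ↦ ?_, fun hz ↦
    tprod_of_exists_eq_zero ⟨⟨z, hz⟩, sigmaFactor_eq_zero_iff.mpr rfl⟩⟩
  refine tprod_one_add_ne_zero_of_summable (fun l ↦ ?_) (L.summable_norm_sigmaFactor_sub_one z)
    (by simpa only [add_sub_cancel] using h)
  rw [add_sub_cancel, ne_eq, sigmaFactor_eq_zero_iff]
  rintro rfl
  exact hz l.2

lemma sigma_ne_zero {z : ℂ} (hz : z ∉ L.lattice) : L.sigma z ≠ 0 :=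
  mt L.sigma_eq_zero_iff.mp hz

lemma sigma_zero : L.sigma 0 = 0 := L.sigma_eq_zero_iff.mpr (zero_mem _)

lemma per_neg (p : ℤ × ℤ) : L.per (-p) = -L.per p := by
  simp only [per, Prod.fst_neg, Prod.snd_neg, neg_smul, neg_add]

lemma sigma_neg (z : ℂ) : L.sigma (-z) = -L.sigma z := by
  let e : {p : ℤ × ℤ // p ≠ 0} ≃ {p : ℤ × ℤ // p ≠ 0} :=
    (Equiv.neg (ℤ × ℤ)).subtypeEquiv fun _ ↦ neg_ne_zero.symm
  rw [sigma, sigma, neg_mul, ← e.tprod_eq]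
  congr 2
  refine tprod_congr fun p ↦ ?_
  rw [show (e p : ℤ × ℤ) = -p from rfl, L.per_neg, neg_div_neg_eq, neg_sq, neg_sq]

lemma deriv_sigma_neg (z : ℂ) : deriv L.sigma (-z) = deriv L.sigma z := by
  have h := deriv_comp_neg L.sigma z
  rw [funext L.sigma_neg, deriv.fun_neg] at h
  exact (neg_inj.mp h).symm

lemma deriv_prod_sigmaFactor_zero {t : Finset L.lattice} (ht : 0 ∈ t) :
    deriv (fun z ↦ ∏ l ∈ t, sigmaFactor l z) 0 = 1 := by
  classical
  have hone : ∏ l ∈ t.erase 0, sigmaFactor l 0 = 1 :=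
    Finset.prod_eq_one fun l hl ↦ sigmaFactor_zero_right (by simpa using Finset.ne_of_mem_erase hl)
  have hsplit : (fun z ↦ ∏ l ∈ t, sigmaFactor l z) =
      fun z ↦ z * ∏ l ∈ t.erase 0, sigmaFactor l z := by
    funext z
    rw [← Finset.mul_prod_erase t _ ht, ZeroMemClass.coe_zero, sigmaFactor_zero_left]
  rw [hsplit, deriv_fun_mul differentiableAt_fun_id (L.differentiable_prod_sigmaFactor _ 0), hone]
  simp

lemma deriv_sigma_zero : deriv L.sigma 0 = 1 := by
  have h := (L.tendstoLocallyUniformlyOn_prod_sigmaFactor.deriv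
    (.of_forall fun t ↦ (L.differentiable_prod_sigmaFactor t).differentiableOn)
    isOpen_univ).tendsto_at (Set.mem_univ 0)
  refine tendsto_nhds_unique h (tendsto_const_nhds.congr' ?_)
  filter_upwards [eventually_ge_atTop {0}] with t ht
  exact (L.deriv_prod_sigmaFactor_zero (Finset.singleton_subset_iff.mp ht)).symm

lemma hasSum_zeta {z : ℂ} (hz : z ∉ L.lattice) :
    HasSum (fun l : L.lattice ↦ 1 / (z - l) + 1 / (l : ℂ) + z / (l : ℂ) ^ 2) (L.zeta z) := by
  have hne (l : L.lattice) : z ≠ l := by rintro rfl; exact hz l.2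
  refine (Complex.logDeriv_tendsto isOpen_univ (Set.mem_univ z)
    L.tendstoLocallyUniformlyOn_prod_sigmaFactor
    (.of_forall fun t ↦ (L.differentiable_prod_sigmaFactor t).differentiableOn)
    (L.sigma_ne_zero hz)).congr fun t ↦ ?_
  rw [logDeriv_prod (fun l _ ↦ mt sigmaFactor_eq_zero_iff.mp (hne l))
    fun l _ ↦ differentiable_sigmaFactor _ z]
  exact Finset.sum_congr rfl fun l _ ↦ logDeriv_sigmaFactor (hne l)

lemma zeta_neg (z : ℂ) : L.zeta (-z) = -L.zeta z := by
  rw [zeta, zeta, L.deriv_sigma_neg, L.sigma_neg, div_neg]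

/-- The series of `ζ` is differentiated term by term. -/
lemma hasDerivAt_zeta {z : ℂ} (hz : z ∉ L.lattice) :
    HasDerivAt L.zeta (-L.toPeriodPair.weierstrassP z) z := by
  have hP := (hasSumLocallyUniformlyOn_iff_tendstoLocallyUniformlyOn.mp
    (L.toPeriodPair.hasSumLocallyUniformly_weierstrassP.hasSumLocallyUniformlyOn
      (s := (L.lattice : Set ℂ)ᶜ))).neg
  refine hasDerivAt_of_tendstoLocallyUniformlyOn L.isOpen_compl_lattice hP
    (f := fun (t : Finset L.lattice) z ↦
      ∑ l ∈ t, (1 / (z - l) + 1 / (l : ℂ) + z / (l : ℂ) ^ 2))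
    (.of_forall fun t y hy ↦ ?_) (fun y hy ↦ L.hasSum_zeta hy) hz
  simp only [Pi.neg_apply, ← Finset.sum_neg_distrib]
  refine HasDerivAt.fun_sum fun l _ ↦ ?_
  have hyl : y - l ≠ 0 := sub_ne_zero.mpr fun h ↦ hy (h ▸ l.2)
  have hinv : HasDerivAt (fun y : ℂ ↦ 1 / (y - l)) (-1 / (y - l) ^ 2) y := by
    simpa using ((hasDerivAt_id y).sub_const (l : ℂ)).fun_inv hyl
  convert! (hinv.add_const (1 / (l : ℂ))).add ((hasDerivAt_id y).div_const ((l : ℂ) ^ 2)) using 1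
  ring

lemma hasDerivAt_sigma {z : ℂ} (hz : z ∉ L.lattice) :
    HasDerivAt L.sigma (L.zeta z * L.sigma z) z := by
  rw [zeta, div_mul_cancel₀ _ (L.sigma_ne_zero hz)]
  exact (L.differentiable_sigma z).hasDerivAt

lemma add_mem_lattice_iff {w : ℂ} (hw : w ∈ L.lattice) (z : ℂ) :
    z + w ∈ L.lattice ↔ z ∈ L.lattice :=
  Submodule.add_mem_iff_left _ hw

lemma exists_eq_of_hasDerivAt_zero {f : ℂ → ℂ} (hf : ∀ z ∉ L.lattice, HasDerivAt f 0 z) :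
    ∃ c, ∀ z ∉ L.lattice, f z = c :=
  L.isOpen_compl_lattice.exists_is_const_of_deriv_eq_zero L.isConnected_compl_lattice.isPreconnected
    (fun z hz ↦ (hf z hz).differentiableAt.differentiableWithinAt) fun z hz ↦ (hf z hz).deriv

lemma exists_zeta_add_eq {w : ℂ} (hw : w ∈ L.lattice) :
    ∃ η, ∀ z ∉ L.lattice, L.zeta (z + w) = L.zeta z + η := by
  obtain ⟨η, hη⟩ := L.exists_eq_of_hasDerivAt_zero (f := fun z ↦ L.zeta (z + w) - L.zeta z)
    fun z hz ↦ by
      have h := ((L.hasDerivAt_zeta (mt (L.add_mem_lattice_iff hw z).mp hz)).comp_add_const z w).sub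
        (L.hasDerivAt_zeta hz)
      rwa [L.toPeriodPair.weierstrassP_add_coe z ⟨w, hw⟩, sub_self] at h
  exact ⟨η, fun z hz ↦ (sub_eq_iff_eq_add'.mp (hη z hz))⟩

lemma exists_sigma_add_eq {w : ℂ} (hw : w ∈ L.lattice) :
    ∃ c η : ℂ, c ≠ 0 ∧ ∀ z, L.sigma (z + w) = c * Complex.exp (η * z) * L.sigma z := by
  obtain ⟨η, hη⟩ := L.exists_zeta_add_eq hw
  have hadd {z : ℂ} (hz : z ∉ L.lattice) : z + w ∉ L.lattice :=
    mt (L.add_mem_lattice_iff hw z).mp hz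
  obtain ⟨c, hc⟩ := L.exists_eq_of_hasDerivAt_zero
    (f := fun z ↦ L.sigma (z + w) * Complex.exp (-(η * z)) / L.sigma z) fun z hz ↦ by
      have h := (((L.hasDerivAt_sigma (hadd hz)).comp_add_const z w).mul
        ((hasDerivAt_id z).const_mul η).neg.cexp).div (L.hasDerivAt_sigma hz) (L.sigma_ne_zero hz)
      convert! h using 1
      simp only [Pi.mul_apply, Pi.neg_apply, id, hη z hz]
      ring
  refine ⟨c, η, ?_, fun z ↦ ?_⟩
  · obtain ⟨z, hz⟩ := L.isConnected_compl_lattice.nonempty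
    rw [← hc z hz]
    exact div_ne_zero (mul_ne_zero (L.sigma_ne_zero (hadd hz)) (Complex.exp_ne_zero _))
      (L.sigma_ne_zero hz)
  · by_cases hz : z ∈ L.lattice
    · rw [L.sigma_eq_zero_iff.mpr hz, mul_zero, L.sigma_eq_zero_iff, L.add_mem_lattice_iff hw]
      exact hz
    · rw [mul_right_comm, ← div_eq_iff (Complex.exp_ne_zero _), ← div_eq_iff (L.sigma_ne_zero hz),
        ← hc z hz, Complex.exp_neg, div_eq_mul_inv (L.sigma _) (Complex.exp _)]

lemma exists_deriv_sigma_add_eq {w : ℂ} (hw : w ∈ L.lattice) :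
    ∃ c η : ℂ, c ≠ 0 ∧ (∀ z, L.sigma (z + w) = c * Complex.exp (η * z) * L.sigma z) ∧
      ∀ z, deriv L.sigma (z + w) =
        c * Complex.exp (η * z) * (deriv L.sigma z + η * L.sigma z) := by
  obtain ⟨c, η, hc, hσ⟩ := L.exists_sigma_add_eq hw
  refine ⟨c, η, hc, hσ, fun z ↦ ?_⟩
  have h : HasDerivAt (fun z ↦ c * Complex.exp (η * z) * L.sigma z) _ z :=
    (((hasDerivAt_id z).const_mul η).cexp.const_mul c).mul (L.differentiable_sigma z).hasDerivAt
  rw [← deriv_comp_add_const, funext hσ, h.deriv]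
  simp only [id]
  ring

lemma deriv_sigma_ne_zero {w : ℂ} (hw : w ∈ L.lattice) : deriv L.sigma w ≠ 0 := by
  obtain ⟨c, η, hc, -, hσ'⟩ := L.exists_deriv_sigma_add_eq hw
  rw [← zero_add w, hσ', L.deriv_sigma_zero, L.sigma_zero]
  simpa using hc

/-- The numerator of `ζ(x) + ζ(y) + ζ(z) - ζ(x + y + z)` over the common denominator
`σ(x) σ(y) σ(z) σ(x + y + z)`. -/
def zetaSumNumerator (x y z : ℂ) : ℂ :=
  (deriv L.sigma x * L.sigma y * L.sigma z + L.sigma x * deriv L.sigma y * L.sigma z +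
    L.sigma x * L.sigma y * deriv L.sigma z) * L.sigma (x + y + z) -
  L.sigma x * L.sigma y * L.sigma z * deriv L.sigma (x + y + z)

lemma zetaSumNumerator_swap (x y z : ℂ) :
    L.zetaSumNumerator x y z = L.zetaSumNumerator x z y := by
  rw [zetaSumNumerator, zetaSumNumerator, add_right_comm x y z]
  ring

lemma differentiable_deriv_sigma : Differentiable ℂ (deriv L.sigma) :=
  L.differentiable_sigma.deriv

lemma differentiable_zetaSumNumerator (y z : ℂ) :
    Differentiable ℂ fun x ↦ L.zetaSumNumerator x y z := by
  have hσ := L.differentiable_sigma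
  unfold zetaSumNumerator
  fun_prop

lemma zetaSumNumerator_zero (y z : ℂ) :
    L.zetaSumNumerator 0 y z = L.sigma (y + z) * (L.sigma y * L.sigma z) := by
  rw [zetaSumNumerator, L.sigma_zero, L.deriv_sigma_zero, zero_add]
  ring

lemma zetaSumNumerator_neg (y z : ℂ) : L.zetaSumNumerator (-y) y z = 0 := by
  rw [zetaSumNumerator, L.sigma_neg, L.deriv_sigma_neg, neg_add_cancel, zero_add]
  ring

lemma exists_zetaSumNumerator_add_eq (y z : ℂ) {w : ℂ} (hw : w ∈ L.lattice) :
    ∃ q : ℂ → ℂ, (∀ x, q x ≠ 0) ∧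
      (∀ x, L.zetaSumNumerator (x + w) y z = q x * L.zetaSumNumerator x y z) ∧
      ∀ x, L.sigma (x + w + y) * L.sigma (x + w + z) =
        q x * (L.sigma (x + y) * L.sigma (x + z)) := by
  obtain ⟨c, η, hc, hσ, hσ'⟩ := L.exists_deriv_sigma_add_eq hw
  refine ⟨fun x ↦ c ^ 2 * (Complex.exp (η * x) * Complex.exp (η * (x + y + z))),
    fun x ↦ mul_ne_zero (pow_ne_zero 2 hc)
      (mul_ne_zero (Complex.exp_ne_zero _) (Complex.exp_ne_zero _)), fun x ↦ ?_, fun x ↦ ?_⟩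
  · rw [zetaSumNumerator, zetaSumNumerator, add_right_comm x w y, add_right_comm (x + y) w z,
      hσ, hσ, hσ', hσ']
    ring
  · have hexp : Complex.exp (η * x) * Complex.exp (η * (x + y + z)) =
        Complex.exp (η * (x + y)) * Complex.exp (η * (x + z)) := by
      rw [← Complex.exp_add, ← Complex.exp_add]
      ring_nf
    simp only [add_right_comm x w, hσ, hexp]
    ring

lemma zetaSumNumerator_eq_zero {x y z : ℂ} (hxy : x + y ∈ L.lattice) :
    L.zetaSumNumerator x y z = 0 := by
  obtain ⟨q, -, hq, -⟩ := L.exists_zetaSumNumerator_add_eq y z hxy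
  rw [show x = -y + (x + y) by ring, hq, L.zetaSumNumerator_neg, mul_zero]

lemma deriv_sigma_mul_sigma_ne_zero {x y z : ℂ} (hyz : y - z ∉ L.lattice)
    (hx : L.sigma (x + y) * L.sigma (x + z) = 0) :
    deriv (fun x ↦ L.sigma (x + y) * L.sigma (x + z)) x ≠ 0 := by
  have hσ (a : ℂ) : HasDerivAt (fun x ↦ L.sigma (x + a)) (deriv L.sigma (x + a)) x :=
    (L.differentiable_sigma (x + a)).hasDerivAt.comp_add_const x a
  have hderiv := ((hσ y).fun_mul (hσ z)).deriv
  have hnot_both : ¬ (x + y ∈ L.lattice ∧ x + z ∈ L.lattice) := fun h ↦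
    hyz (by simpa using sub_mem h.1 h.2)
  rw [hderiv]
  rcases mul_eq_zero.mp hx with h | h
  · have hy := L.sigma_eq_zero_iff.mp h
    rw [h, zero_mul, add_zero]
    exact mul_ne_zero (L.deriv_sigma_ne_zero hy) (L.sigma_ne_zero fun hz ↦ hnot_both ⟨hy, hz⟩)
  · have hz := L.sigma_eq_zero_iff.mp h
    rw [h, mul_zero, zero_add]
    exact mul_ne_zero (L.sigma_ne_zero fun hy ↦ hnot_both ⟨hy, hz⟩) (L.deriv_sigma_ne_zero hz)

lemma zetaSumNumerator_eq_of_notMem {y z : ℂ} (hy : y ∉ L.lattice) (hz : z ∉ L.lattice)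
    (hyz : y - z ∉ L.lattice) (x : ℂ) :
    L.zetaSumNumerator x y z = L.sigma (y + z) * (L.sigma (x + y) * L.sigma (x + z)) := by
  have hσ := L.differentiable_sigma
  obtain ⟨c, hc⟩ := exists_eq_const_mul_of_quasiperiodic
    (d := fun x ↦ L.sigma (x + y) * L.sigma (x + z)) L.lattice
    (L.differentiable_zetaSumNumerator y z) (by fun_prop)
    (fun x hx ↦ (mul_eq_zero.mp hx).elim
      (fun h ↦ L.zetaSumNumerator_eq_zero (L.sigma_eq_zero_iff.mp h))
      fun h ↦ by
        rw [L.zetaSumNumerator_swap]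
        exact L.zetaSumNumerator_eq_zero (L.sigma_eq_zero_iff.mp h))
    (fun x hx ↦ L.deriv_sigma_mul_sigma_ne_zero hyz hx)
    fun w hw ↦ L.exists_zetaSumNumerator_add_eq y z hw
  have hc₀ : L.sigma (y + z) = c := by
    have h := hc 0
    rw [L.zetaSumNumerator_zero, zero_add, zero_add] at h
    exact mul_right_cancel₀ (mul_ne_zero (L.sigma_ne_zero hy) (L.sigma_ne_zero hz)) h
  rw [hc, hc₀]

lemma dense_setOf_notMem_and_sub_notMem (z : ℂ) :
    Dense {y | y ∉ L.lattice ∧ y - z ∉ L.lattice} := by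
  have h := (L.countable_lattice.union
    (L.countable_lattice.preimage (sub_left_injective (b := z)))).dense_compl ℝ
  rwa [Set.compl_union] at h

/-- The addition formula of `ζ`, cleared of denominators so that it holds without exception. -/
lemma zetaSumNumerator_eq (x y z : ℂ) :
    L.zetaSumNumerator x y z = L.sigma (y + z) * (L.sigma (x + y) * L.sigma (x + z)) := by
  have hσ := L.differentiable_sigma.continuous
  have hσ' := L.differentiable_deriv_sigma.continuous
  have hz : ∀ z ∉ L.lattice, ∀ y, L.zetaSumNumerator x y z =
      L.sigma (y + z) * (L.sigma (x + y) * L.sigma (x + z)) := fun z hz ↦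
    congrFun <| Continuous.ext_on (L.dense_setOf_notMem_and_sub_notMem z)
      (f := fun y ↦ L.zetaSumNumerator x y z)
      (g := fun y ↦ L.sigma (y + z) * (L.sigma (x + y) * L.sigma (x + z)))
      (by unfold zetaSumNumerator; fun_prop) (by fun_prop)
      fun y hy ↦ L.zetaSumNumerator_eq_of_notMem hy.1 hz hy.2 x
  exact congrFun (Continuous.ext_on (L.countable_lattice.dense_compl ℝ)
    (f := fun z ↦ L.zetaSumNumerator x y z)
    (g := fun z ↦ L.sigma (y + z) * (L.sigma (x + y) * L.sigma (x + z)))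
    (by unfold zetaSumNumerator; fun_prop) (by fun_prop) fun z h ↦ hz z h y) z

/-- The addition formula of `ζ` for the triples `(ξ, b, δ)`, `(ξ, a, b)` and `(ξ + a + b, δ, -a)`
expresses three sums of values of `ζ` that cancel. -/
lemma sigma_three_term (ξ a b δ : ℂ) :
    L.sigma ξ * L.sigma b * L.sigma (δ - a) * L.sigma (ξ + a + b + δ) =
      L.sigma (ξ + a) * L.sigma δ * L.sigma (a + b) * L.sigma (ξ + b + δ) -
        L.sigma (ξ + δ) * L.sigma a * L.sigma (b + δ) * L.sigma (ξ + a + b) := by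
  have hσ := L.differentiable_sigma.continuous
  refine congrFun (Continuous.ext_on (L.dense_setOf_notMem_and_sub_notMem (-ξ))
    (f := fun b ↦ L.sigma ξ * L.sigma b * L.sigma (δ - a) * L.sigma (ξ + a + b + δ))
    (g := fun b ↦ L.sigma (ξ + a) * L.sigma δ * L.sigma (a + b) * L.sigma (ξ + b + δ) -
      L.sigma (ξ + δ) * L.sigma a * L.sigma (b + δ) * L.sigma (ξ + a + b))
    (by fun_prop) (by fun_prop) fun b hb ↦ ?_) b
  have hξb : L.sigma (ξ + b) ≠ 0 := L.sigma_ne_zero (by simpa [add_comm] using hb.2)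
  have h₁ := L.zetaSumNumerator_eq ξ b δ
  have h₂ := L.zetaSumNumerator_eq ξ a b
  have h₃ := L.zetaSumNumerator_eq (ξ + a + b) δ (-a)
  rw [zetaSumNumerator] at h₁ h₂ h₃
  rw [show ξ + a + b + δ + -a = ξ + b + δ by ring, show ξ + a + b + -a = ξ + b by ring,
    ← sub_eq_add_neg, L.sigma_neg, L.deriv_sigma_neg] at h₃
  refine mul_left_cancel₀ hξb ?_
  linear_combination L.sigma δ * L.sigma (ξ + b + δ) * h₂ -
    L.sigma a * L.sigma (ξ + a + b) * h₁ - L.sigma ξ * L.sigma b * h₃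

lemma chi_eq_div {α β ξ : ℂ} (hα : α ∉ L.lattice) (hβ : β ∉ L.lattice) (hξ : ξ ∉ L.lattice)
    (hsum : ξ + α + β ∉ L.lattice) :
    L.chi α β ξ = L.sigma (α + β) * (L.sigma (ξ + α) * L.sigma (ξ + β)) /
      (L.sigma α * L.sigma β * L.sigma ξ * L.sigma (ξ + α + β)) := by
  have hα' := L.sigma_ne_zero hα
  have hβ' := L.sigma_ne_zero hβ
  have hξ' := L.sigma_ne_zero hξ
  have hsum' := L.sigma_ne_zero hsum
  have h := L.zetaSumNumerator_eq ξ α β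
  rw [zetaSumNumerator] at h
  simp only [chi, zeta]
  field_simp
  linear_combination h

lemma chi_sub_chi (α d κ ξ : ℂ) :
    L.chi α d ξ - L.chi α κ ξ = L.chi d (-κ) (ξ + α + κ) := by
  simp only [chi, L.zeta_neg]
  ring_nf

lemma Phi_mul_Phi {d k ξ : ℂ} (hd : d ∉ L.lattice) (hk : k ∉ L.lattice) (hξ : ξ ∉ L.lattice)
    (hξd : ξ + d ∉ L.lattice) (hsum : ξ + d + k ∉ L.lattice) :
    L.Phi d k * L.Phi ξ k = L.chi k d ξ * L.Phi (ξ + d) k := by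
  have hd' := L.sigma_ne_zero hd
  have hk' := L.sigma_ne_zero hk
  have hξ' := L.sigma_ne_zero hξ
  have hξd' := L.sigma_ne_zero hξd
  have hsum' := L.sigma_ne_zero hsum
  rw [L.chi_eq_div hk hd hξ (by rwa [add_right_comm]), Phi, Phi, Phi, add_right_comm ξ k,
    add_comm k]
  field_simp

lemma Phi_neg_mul_Phi {d k ξ : ℂ} (hd : d ∉ L.lattice) (hk : k ∉ L.lattice) (hξ : ξ ∉ L.lattice)
    (hξd : ξ + d ∉ L.lattice) (hξk : ξ + k ∉ L.lattice) :
    L.Phi d (-k) * L.Phi (ξ + d) k = L.chi d (-k) (ξ + k) * L.Phi ξ k := by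
  have hd' := L.sigma_ne_zero hd
  have hk' := L.sigma_ne_zero hk
  have hξ' := L.sigma_ne_zero hξ
  have hξd' := L.sigma_ne_zero hξd
  have hξk' := L.sigma_ne_zero hξk
  have hsum : ξ + k + d + -k = ξ + d := by ring
  rw [L.chi_eq_div hd (neg_mem_iff.not.mpr hk) hξk (by rwa [hsum]), hsum, add_neg_cancel_right,
    Phi, Phi, Phi, L.sigma_neg, add_right_comm ξ d]
  field_simp

lemma Phi_neg_mul_Phi_add {δ ξ a b : ℂ} (hδ : δ ∉ L.lattice) (hξ : ξ ∉ L.lattice)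
    (hξδ : ξ + δ ∉ L.lattice) (ha : a ∉ L.lattice) (hb : b ∉ L.lattice) (hab : a + b ∉ L.lattice) :
    L.Phi δ (-a) * L.Phi (ξ + δ) (a + b) =
      L.Phi ξ (a + b) * L.Phi δ b - L.Phi ξ a * L.Phi (ξ + δ) b := by
  have hδ' := L.sigma_ne_zero hδ
  have hξ' := L.sigma_ne_zero hξ
  have hξδ' := L.sigma_ne_zero hξδ
  have ha' := L.sigma_ne_zero ha
  have hb' := L.sigma_ne_zero hb
  have hab' := L.sigma_ne_zero hab
  have h := L.sigma_three_term ξ a b δ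
  simp only [Phi, L.sigma_neg, ← sub_eq_add_neg]
  rw [show ξ + δ + (a + b) = ξ + a + b + δ by ring, add_right_comm ξ δ b, add_comm δ b,
    ← add_assoc ξ a b]
  field_simp
  linear_combination -h

lemma chi_neg_mul_chi {α d κ ξ : ℂ} (hα : α ∉ L.lattice) (hd : d ∉ L.lattice) (hκ : κ ∉ L.lattice)
    (hξ : ξ ∉ L.lattice) (hξd : ξ + d ∉ L.lattice) (hξκ : ξ + κ ∉ L.lattice)
    (hξακ : ξ + α + κ ∉ L.lattice) (hξdα : ξ + d + α ∉ L.lattice)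
    (hξdακ : ξ + d + α + κ ∉ L.lattice) :
    L.chi d (-κ) (ξ + κ) * L.chi α κ ξ =
      L.chi α κ (ξ + d) * (L.chi α d ξ - L.chi α κ ξ) := by
  have hα' := L.sigma_ne_zero hα
  have hd' := L.sigma_ne_zero hd
  have hκ' := L.sigma_ne_zero hκ
  have hξ' := L.sigma_ne_zero hξ
  have hξd' := L.sigma_ne_zero hξd
  have hξκ' := L.sigma_ne_zero hξκ
  have hξακ' := L.sigma_ne_zero hξακ
  have hξdα' := L.sigma_ne_zero hξdα
  have hξdακ' := L.sigma_ne_zero hξdακ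
  have hnegκ := neg_mem_iff.not.mpr hκ
  have hsum₁ : ξ + κ + d + -κ = ξ + d := by ring
  have hsum₂ : ξ + α + κ + d + -κ = ξ + d + α := by ring
  rw [chi_sub_chi, L.chi_eq_div hd hnegκ hξκ (by rwa [hsum₁]), L.chi_eq_div hα hκ hξ hξακ,
    L.chi_eq_div hα hκ hξd hξdακ, L.chi_eq_div hd hnegκ hξακ (by rwa [hsum₂]), hsum₁, hsum₂,
    add_neg_cancel_right, add_neg_cancel_right, L.sigma_neg, add_right_comm ξ κ d,
    show ξ + α + κ + d = ξ + d + α + κ by ring]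
  field_simp

lemma Phi_ne_zero {ξ k : ℂ} (hξ : ξ ∉ L.lattice) (hk : k ∉ L.lattice) (hξk : ξ + k ∉ L.lattice) :
    L.Phi ξ k ≠ 0 :=
  div_ne_zero (L.sigma_ne_zero hξk) (mul_ne_zero (L.sigma_ne_zero hξ) (L.sigma_ne_zero hk))

lemma exp_mul_Psi (d k : ℂ) : Complex.exp (L.zeta d * k) * L.Psi d k = L.Phi d k := by
  rw [Psi, mul_left_comm, ← Complex.exp_add, neg_mul, add_neg_cancel, Complex.exp_zero, mul_one]

lemma exp_mul_Psi_neg (d k : ℂ) : Complex.exp (-L.zeta d * k) * L.Psi d (-k) = L.Phi d (-k) := by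
  rw [← L.exp_mul_Psi, mul_neg, neg_mul]

lemma chi_sub_chi_of_add_eq {δ ε ξ ξ' : ℂ} (h : ξ + δ = ξ' + ε) (α : ℂ) :
    L.chi α δ ξ - L.chi α ε ξ' = L.zeta δ + L.zeta ξ - L.zeta ε - L.zeta ξ' := by
  rw [chi, chi, add_right_comm ξ, add_right_comm ξ', h]
  ring

end EllLattice

namespace KPData

variable {N N' : ℕ}

/-- The plane-wave factor `ρ_i` without its `ξ`-dependent exponential, which only serves to turn
`Ψ_ξ` into `Φ_ξ`. -/
def bareρ (D : KPData N N') (i : Fin N) (n m h : ℤ) : ℂ :=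
  D.L.Phi D.del (-D.κ i) ^ n * D.L.Phi D.eps (-D.κ i) ^ m * D.L.Phi D.lam (-D.κ i) ^ h * D.ρ0 i

/-- The plane-wave factor `ν_j` without its `ξ`-dependent exponential, which only serves to turn
`Ψ_ξ` into `Φ_ξ`. -/
def bareν (D : KPData N N') (j : Fin N') (n m h : ℤ) : ℂ :=
  D.L.Phi D.del (D.κ' j) ^ (-n) * D.L.Phi D.eps (D.κ' j) ^ (-m) * D.L.Phi D.lam (D.κ' j) ^ (-h) *
    D.ν0 j

variable (D : KPData N N') (n m h : ℤ)

lemma ρ_eq (i : Fin N) :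
    D.ρ i n m h = D.bareρ i n m h * Complex.exp (D.L.zeta (D.xi n m h) * D.κ i) := by
  simp only [ρ, bareρ, EllLattice.exp_mul_Psi_neg]
  ring

lemma ν_eq (j : Fin N') :
    D.ν j n m h = D.bareν j n m h * Complex.exp (D.L.zeta (D.xi n m h) * D.κ' j) := by
  simp only [ν, bareν, EllLattice.exp_mul_Psi]
  ring

lemma r_apply (i : Fin N) : D.r n m h i = D.bareρ i n m h * D.L.Phi (D.xi n m h) (D.κ i) := by
  rw [r, ρ_eq, mul_assoc, EllLattice.exp_mul_Psi]

lemma s_apply (j : Fin N') : D.s n m h j = D.bareν j n m h * D.L.Phi (D.xi n m h) (D.κ' j) := by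
  rw [s, ν_eq, mul_assoc, EllLattice.exp_mul_Psi]

lemma M_apply (i : Fin N) (j : Fin N') : D.M n m h i j =
    D.bareρ i n m h * D.L.Phi (D.xi n m h) (D.κ i + D.κ' j) * D.bareν j n m h := by
  rw [M, Matrix.of_apply, ρ_eq, ν_eq, ← D.L.exp_mul_Psi (D.xi n m h), mul_add, Complex.exp_add]
  ring

variable {D n m h} {α : ℂ}

lemma V_eq (hInv : IsUnit (1 + D.M n m h * D.C).det) :
    D.V α n m h = 1 - D.s n m h ⬝ᵥ (D.C *ᵥ D.u α n m h) := by
  rw [V, u, Matrix.mulVec_mulVec, one_add_mul_inv_mul hInv, ← Matrix.mulVec_mulVec]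

lemma DK_inv_mulVec_r_apply (hχ : ∀ i, D.L.chi α (D.κ i) (D.xi n m h) ≠ 0) (i : Fin N) :
    ((D.DK α n m h)⁻¹ *ᵥ D.r n m h) i = (D.L.chi α (D.κ i) (D.xi n m h))⁻¹ * D.r n m h i := by
  have hinv : D.DK α n m h * Matrix.diagonal (fun i ↦ (D.L.chi α (D.κ i) (D.xi n m h))⁻¹) = 1 := by
    simp only [DK, Matrix.diagonal_mul_diagonal, mul_inv_cancel₀ (hχ _), Matrix.diagonal_one]
  rw [Matrix.inv_eq_right_inv hinv, Matrix.mulVec_diagonal]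

/-- General position of a value `ξ`, a lattice parameter `d`, the rapidities and the auxiliary
point `α`: no nontrivial integer combination lies in `Λ`. -/
def IsGeneric (D : KPData N N') (α d ξ : ℂ) : Prop :=
  ∀ (c₀ c : ℤ) (a : Fin N → ℤ) (b : Fin N' → ℤ) (e : ℤ),
    ¬ (c₀ = 0 ∧ c = 0 ∧ a = 0 ∧ b = 0 ∧ e = 0) →
    c₀ • ξ + c • d + (∑ i, a i • D.κ i) + (∑ j, b j • D.κ' j) + e • α ∉ D.L.lattice

namespace IsGeneric

variable {d ξ : ℂ}

lemma notMem (hg : D.IsGeneric α d ξ) (c₀ c e : ℤ)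
    (hne : ¬ (c₀ = 0 ∧ c = 0 ∧ e = 0)) : c₀ • ξ + c • d + e • α ∉ D.L.lattice := by
  simpa using hg c₀ c 0 0 e (by simpa using hne)

lemma notMem_κ (hg : D.IsGeneric α d ξ) (c₀ c e : ℤ) {k : ℤ} (hk : k ≠ 0) (i : Fin N) :
    c₀ • ξ + c • d + k • D.κ i + e • α ∉ D.L.lattice := by
  simpa [Pi.single_apply] using hg c₀ c (Pi.single i k) 0 e (by simp [hk])

lemma notMem_κ' (hg : D.IsGeneric α d ξ) (c₀ c : ℤ) (j : Fin N') :
    c₀ • ξ + c • d + D.κ' j ∉ D.L.lattice := by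
  simpa [Pi.single_apply] using hg c₀ c 0 (Pi.single j 1) 0 (by simp)

lemma xi_notMem (hg : D.IsGeneric α d ξ) : ξ ∉ D.L.lattice := by
  simpa using hg.notMem 1 0 0 (by simp)

lemma param_notMem (hg : D.IsGeneric α d ξ) : d ∉ D.L.lattice := by
  simpa using hg.notMem 0 1 0 (by simp)

lemma xi_add_param_notMem (hg : D.IsGeneric α d ξ) : ξ + d ∉ D.L.lattice := by
  simpa using hg.notMem 1 1 0 (by simp)

lemma κ_notMem (hg : D.IsGeneric α d ξ) (i : Fin N) : D.κ i ∉ D.L.lattice := by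
  simpa using hg.notMem_κ 0 0 0 one_ne_zero i

lemma κ'_notMem (hg : D.IsGeneric α d ξ) (j : Fin N') : D.κ' j ∉ D.L.lattice := by
  simpa using hg.notMem_κ' 0 0 j

lemma xi_add_κ_notMem (hg : D.IsGeneric α d ξ) (i : Fin N) : ξ + D.κ i ∉ D.L.lattice := by
  simpa using hg.notMem_κ 1 0 0 one_ne_zero i

lemma κ_add_κ'_notMem (hg : D.IsGeneric α d ξ) (i : Fin N) (j : Fin N') :
    D.κ i + D.κ' j ∉ D.L.lattice := by
  simpa [Pi.single_apply] using hg 0 0 (Pi.single i 1) (Pi.single j 1) 0 (by simp)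

lemma Phi_neg_κ_ne_zero (hg : D.IsGeneric α d ξ) (i : Fin N) : D.L.Phi d (-D.κ i) ≠ 0 :=
  D.L.Phi_ne_zero hg.param_notMem (neg_mem_iff.not.mpr (hg.κ_notMem i))
    (by simpa using hg.notMem_κ 0 1 0 (k := -1) (by simp) i)

lemma Phi_κ'_ne_zero (hg : D.IsGeneric α d ξ) (j : Fin N') : D.L.Phi d (D.κ' j) ≠ 0 :=
  D.L.Phi_ne_zero hg.param_notMem (hg.κ'_notMem j) (by simpa using hg.notMem_κ' 0 1 j)

end IsGeneric

/-- The lattice site `(n', m', h')` is reached from `(n, m, h)` by one step in a direction whose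
lattice parameter is `d`, and the parameters are in general position there. -/
structure IsStep (D : KPData N N') (α d : ℂ) (n m h n' m' h' : ℤ) : Prop where
  generic : D.IsGeneric α d (D.xi n m h)
  xi : D.xi n' m' h' = D.xi n m h + d
  bareρ : ∀ i, D.bareρ i n' m' h' = D.L.Phi d (-D.κ i) * D.bareρ i n m h
  bareν : ∀ j, D.bareν j n m h = D.L.Phi d (D.κ' j) * D.bareν j n' m' h'

namespace Generic

lemma notMem (hg : D.Generic ![α]) (c₀ cn cm ch : ℤ) (a : Fin N → ℤ) (b : Fin N' → ℤ) (e : ℤ)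
    (hne : ¬ (c₀ = 0 ∧ cn = 0 ∧ cm = 0 ∧ ch = 0 ∧ a = 0 ∧ b = 0 ∧ e = 0)) :
    c₀ • D.xi0 + cn • D.del + cm • D.eps + ch • D.lam + (∑ i, a i • D.κ i) +
      (∑ j, b j • D.κ' j) + e • α ∉ D.L.lattice := by
  rw [← EllLattice.mem_iff]
  simpa using hg c₀ cn cm ch a b ![e] (by simpa [funext_iff] using hne)

lemma isGeneric_del (hg : D.Generic ![α]) (n m h : ℤ) :
    D.IsGeneric α D.del (D.xi n m h) := by
  intro c₀ c a b e hne
  convert hg.notMem c₀ (c₀ * n + c) (c₀ * m) (c₀ * h) a b e (by grind) using 4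
  simp only [KPData.xi, zsmul_eq_mul]
  push_cast
  ring

lemma isGeneric_eps (hg : D.Generic ![α]) (n m h : ℤ) :
    D.IsGeneric α D.eps (D.xi n m h) := by
  intro c₀ c a b e hne
  convert hg.notMem c₀ (c₀ * n) (c₀ * m + c) (c₀ * h) a b e (by grind) using 4
  simp only [KPData.xi, zsmul_eq_mul]
  push_cast
  ring

lemma isStep_del (hg : D.Generic ![α]) (n m h : ℤ) : D.IsStep α D.del n m h (n + 1) m h where
  generic := hg.isGeneric_del n m h
  xi := by simp only [KPData.xi, add_smul, one_smul]; ring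
  bareρ i := by
    rw [KPData.bareρ, KPData.bareρ, zpow_add_one₀ ((hg.isGeneric_del n m h).Phi_neg_κ_ne_zero i)]
    ring
  bareν j := by
    have hΦ := (hg.isGeneric_del n m h).Phi_κ'_ne_zero j
    rw [KPData.bareν, KPData.bareν, neg_add, zpow_add₀ hΦ, _root_.zpow_neg_one]
    field_simp

lemma isStep_eps (hg : D.Generic ![α]) (n m h : ℤ) : D.IsStep α D.eps n m h n (m + 1) h where
  generic := hg.isGeneric_eps n m h
  xi := by simp only [KPData.xi, add_smul, one_smul]; ring
  bareρ i := by
    rw [KPData.bareρ, KPData.bareρ, zpow_add_one₀ ((hg.isGeneric_eps n m h).Phi_neg_κ_ne_zero i)]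
    ring
  bareν j := by
    have hΦ := (hg.isGeneric_eps n m h).Phi_κ'_ne_zero j
    rw [KPData.bareν, KPData.bareν, neg_add, zpow_add₀ hΦ, _root_.zpow_neg_one]
    field_simp

end Generic

namespace IsStep

variable {n' m' h' : ℤ} {d : ℂ}

lemma M_eq (S : D.IsStep α d n m h n' m' h') :
    D.M n' m' h' = D.M n m h - vecMulVec (D.r n m h) (D.s n' m' h') := by
  ext i j
  have hg := S.generic
  have hFay := D.L.Phi_neg_mul_Phi_add hg.param_notMem hg.xi_notMem hg.xi_add_param_notMem
    (hg.κ_notMem i) (hg.κ'_notMem j) (hg.κ_add_κ'_notMem i j)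
  rw [Matrix.sub_apply, Matrix.vecMulVec_apply, M_apply, M_apply, r_apply, s_apply, S.xi,
    S.bareρ, S.bareν]
  linear_combination D.bareρ i n m h * D.bareν j n' m' h' * hFay

lemma s_apply (S : D.IsStep α d n m h n' m' h') (j : Fin N') :
    D.s n m h j = D.L.chi (D.κ' j) d (D.xi n m h) * D.s n' m' h' j := by
  have hg := S.generic
  have hΦ := D.L.Phi_mul_Phi hg.param_notMem (hg.κ'_notMem j) hg.xi_notMem hg.xi_add_param_notMem
    (by simpa using hg.notMem_κ' 1 1 j)
  rw [KPData.s_apply, KPData.s_apply, S.bareν, S.xi]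
  linear_combination D.bareν j n' m' h' * hΦ

lemma r_apply (S : D.IsStep α d n m h n' m' h') (i : Fin N) :
    D.r n' m' h' i = D.L.chi d (-D.κ i) (D.xi n m h + D.κ i) * D.r n m h i := by
  have hg := S.generic
  have hΦ := D.L.Phi_neg_mul_Phi hg.param_notMem (hg.κ_notMem i) hg.xi_notMem
    hg.xi_add_param_notMem (hg.xi_add_κ_notMem i)
  rw [KPData.r_apply, KPData.r_apply, S.bareρ, S.xi]
  linear_combination D.bareρ i n m h * hΦ

lemma DK_inv_mulVec_r_eq (S : D.IsStep α d n m h n' m' h')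
    (hχ : ∀ i, D.L.chi α (D.κ i) (D.xi n m h) ≠ 0)
    (hχ' : ∀ i, D.L.chi α (D.κ i) (D.xi n' m' h') ≠ 0) :
    (D.DK α n' m' h')⁻¹ *ᵥ D.r n' m' h' =
      D.L.chi α d (D.xi n m h) • ((D.DK α n m h)⁻¹ *ᵥ D.r n m h) - D.r n m h := by
  ext i
  have hg := S.generic
  have hprod := D.L.chi_neg_mul_chi (by simpa using hg.notMem 0 0 1 (by simp)) hg.param_notMem
    (hg.κ_notMem i) hg.xi_notMem hg.xi_add_param_notMem (hg.xi_add_κ_notMem i)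
    (by simpa [add_right_comm] using hg.notMem_κ 1 0 1 one_ne_zero i)
    (by simpa using hg.notMem 1 1 1 (by simp))
    (by simpa [add_right_comm] using hg.notMem_κ 1 1 1 one_ne_zero i)
  have hi := hχ i
  have hi' := hχ' i
  rw [← S.xi] at hprod
  rw [Pi.sub_apply, Pi.smul_apply, DK_inv_mulVec_r_apply hχ, DK_inv_mulVec_r_apply hχ',
    S.r_apply, smul_eq_mul]
  field_simp
  linear_combination D.r n m h i * hprod

lemma u_eq (S : D.IsStep α d n m h n' m' h') (hInv : IsUnit (1 + D.M n m h * D.C).det)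
    (hInv' : IsUnit (1 + D.M n' m' h' * D.C).det)
    (hχ : ∀ i, D.L.chi α (D.κ i) (D.xi n m h) ≠ 0)
    (hχ' : ∀ i, D.L.chi α (D.κ i) (D.xi n' m' h') ≠ 0) :
    D.u α n' m' h' = D.L.chi α d (D.xi n m h) • D.u α n m h - D.V α n' m' h' • D.u0 n m h := by
  have hu' : (1 + D.M n' m' h' * D.C) *ᵥ D.u α n' m' h' = (D.DK α n' m' h')⁻¹ *ᵥ D.r n' m' h' := by
    rw [u, Matrix.mulVec_mulVec, Matrix.mul_nonsing_inv _ hInv', Matrix.one_mulVec]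
  rw [S.DK_inv_mulVec_r_eq hχ hχ', S.M_eq] at hu'
  rw [V_eq hInv']
  exact eq_smul_inv_mulVec_sub_of_rank_one_update hInv hu'

lemma chi_mul_V (S : D.IsStep α d n m h n' m' h') (hInv : IsUnit (1 + D.M n m h * D.C).det)
    (hInv' : IsUnit (1 + D.M n' m' h' * D.C).det)
    (hχ : ∀ i, D.L.chi α (D.κ i) (D.xi n m h) ≠ 0)
    (hχ' : ∀ i, D.L.chi α (D.κ i) (D.xi n' m' h') ≠ 0) :
    D.L.chi α d (D.xi n m h) * D.V α n m h = D.L.chi α d (D.xi n m h) -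
      D.s n m h ⬝ᵥ (D.C *ᵥ D.u α n' m' h') - D.V α n' m' h' * D.w0 n m h := by
  have hw0 : D.w0 n m h = D.s n m h ⬝ᵥ (D.C *ᵥ D.u0 n m h) := rfl
  rw [S.u_eq hInv hInv' hχ hχ', V_eq hInv, hw0, Matrix.mulVec_sub, dotProduct_sub,
    Matrix.mulVec_smul, Matrix.mulVec_smul, dotProduct_smul, dotProduct_smul, smul_eq_mul,
    smul_eq_mul]
  ring

/-- The rapidities cancel in the difference of the two factors `χ_{κ′_j,δ}` and `χ_{κ′_j,ε}`. -/
lemma s_sub_s {δ ε : ℂ} {n₁ m₁ h₁ n₂ m₂ h₂ : ℤ} (S₁ : D.IsStep α δ n₁ m₁ h₁ n' m' h')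
    (S₂ : D.IsStep α ε n₂ m₂ h₂ n' m' h') :
    D.s n₁ m₁ h₁ - D.s n₂ m₂ h₂ =
      (D.L.chi α δ (D.xi n₁ m₁ h₁) - D.L.chi α ε (D.xi n₂ m₂ h₂)) • D.s n' m' h' := by
  ext j
  have hxi := S₁.xi.symm.trans S₂.xi
  rw [Pi.sub_apply, Pi.smul_apply, smul_eq_mul, S₁.s_apply, S₂.s_apply, ← sub_mul,
    D.L.chi_sub_chi_of_add_eq hxi, D.L.chi_sub_chi_of_add_eq hxi]

end IsStep

end KPData

/-- Nonlinear shift relation `Ṽ̂_α (ŵ − w̃) = χ_{α,δ}(ξ+ε) V̂_α − χ_{α,ε}(ξ+δ) Ṽ_α`. -/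
theorem V_w_nonlinear_relation {N N' : ℕ} (D : KPData N N') (α : ℂ)
    (hρ0 : ∀ i, D.ρ0 i ≠ 0) (hν0 : ∀ j, D.ν0 j ≠ 0)
    (hgen : D.Generic ![α])
    (hInv : ∀ n m h : ℤ, IsUnit ((1 + D.M n m h * D.C).det))
    (hχα : ∀ (n m h : ℤ) (i : Fin N), D.L.chi α (D.κ i) (D.xi n m h) ≠ 0) :
    ∀ n m h : ℤ,
      D.V α (n + 1) (m + 1) h * (D.w n (m + 1) h - D.w (n + 1) m h) =
        D.L.chi α D.del (D.xi n (m + 1) h) * D.V α n (m + 1) h -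
          D.L.chi α D.eps (D.xi (n + 1) m h) * D.V α (n + 1) m h := by
  intro n m h
  have hdel := hgen.isStep_del n (m + 1) h
  have heps := hgen.isStep_eps (n + 1) m h
  have hVdel := hdel.chi_mul_V (hInv _ _ _) (hInv _ _ _) (hχα _ _ _) (hχα _ _ _)
  have hVeps := heps.chi_mul_V (hInv _ _ _) (hInv _ _ _) (hχα _ _ _) (hχα _ _ _)
  have hs := congrArg (· ⬝ᵥ (D.C *ᵥ D.u α (n + 1) (m + 1) h)) (hdel.s_sub_s heps)
  simp only [sub_dotProduct, smul_dotProduct, smul_eq_mul] at hs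
  have hV := KPData.V_eq (α := α) (hInv (n + 1) (m + 1) h)
  have hχ := D.L.chi_sub_chi_of_add_eq (hdel.xi.symm.trans heps.xi) α
  have hw : D.w n (m + 1) h - D.w (n + 1) m h =
      D.L.chi α D.del (D.xi n (m + 1) h) - D.L.chi α D.eps (D.xi (n + 1) m h) -
        (D.w0 n (m + 1) h - D.w0 (n + 1) m h) := by
    rw [hχ, KPData.w, KPData.w, add_smul, add_smul, one_smul, one_smul]
    ring
  linear_combination D.V α (n + 1) (m + 1) h * hw - hVdel + hVeps + hs +
    (D.L.chi α D.del (D.xi n (m + 1) h) - D.L.chi α D.eps (D.xi (n + 1) m h)) * hV
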